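/- Let Σ_A(ℕ) be a topologically mixing, finitely primitive (BIP) countable Markov shift, f : Σ_A(ℕ) → ℝ satisfying the Walters condition with Var_1 f < ∞ and P(f) < ∞, and for β > 1 let μ_β be the Gibbs measure of βf. Then there exist constants η_1 and η_2 such that for every β > 1, every x = (x_0, x_1, x_2, …) ∈ Σ_A(ℕ) and every m ≥ 1: e^{β η_1} ≤ μ_β([x_0 … x_{m−1}]) / exp(β S_m f(x) − m P(βf)) ≤ e^{β η_2}. -/

import Mathlib

open Filter Topology MeasureTheory
open scoped ENNReal

/-- The countable Markov shift over alphabet ℕ determined by the 0-1 matrix `A`. -/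
def MarkovShift (A : ℕ → ℕ → Bool) : Type :=
  {x : ℕ → ℕ // ∀ i, A (x i) (x (i + 1)) = true}

namespace MarkovShift

variable {A : ℕ → ℕ → Bool}

instance : TopologicalSpace (MarkovShift A) :=
  instTopologicalSpaceSubtype

instance : MeasurableSpace (MarkovShift A) := borel _

instance : BorelSpace (MarkovShift A) := ⟨rfl⟩

/-- The shift map. -/
def shift (x : MarkovShift A) : MarkovShift A :=
  ⟨fun n => x.1 (n + 1), fun i => x.2 (i + 1)⟩

/-- The cylinder set determined by a finite word. -/
def cylinder (w : List ℕ) : Set (MarkovShift A) :=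
  {x | ∀ i : Fin w.length, x.1 i = w.get i}

/-- The cylinder set determined by the first `m` coordinates of `x`. -/
def cylOf (x : MarkovShift A) (m : ℕ) : Set (MarkovShift A) :=
  {y | ∀ i < m, y.1 i = x.1 i}

/-- A symbol is admissible when its cylinder is nonempty. -/
def Admissible (A : ℕ → ℕ → Bool) (a : ℕ) : Prop :=
  ∃ x : MarkovShift A, x.1 0 = a

/-- Topologically mixing. -/
def TopologicallyMixing (A : ℕ → ℕ → Bool) : Prop :=
  ∀ a b : ℕ, Admissible A a → Admissible A b →
    ∃ N : ℕ, ∀ n ≥ N, ∃ x : MarkovShift A, x.1 0 = a ∧ (shift^[n] x).1 0 = b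

/-- Finitely primitive (BIP). -/
def FinitelyPrimitive (A : ℕ → ℕ → Bool) : Prop :=
  ∃ (K₀ : ℕ) (F : Finset ℕ), ∀ a b : ℕ, Admissible A a → Admissible A b →
    ∃ w : List ℕ, w.length = K₀ ∧ (∀ c ∈ w, c ∈ F) ∧
      List.Chain' (fun u v => A u v = true) (a :: (w ++ [b]))

/-- First coordinate where two distinct points disagree. -/
noncomputable def firstDiff (x y : MarkovShift A) (h : x ≠ y) : ℕ :=
  Nat.find (Function.ne_iff.mp (fun hxy : x.1 = y.1 => h (Subtype.ext hxy)))

open Classical in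
/-- The metric `d(x,y) = r^{t(x,y)}`. -/
noncomputable def dist' (r : ℝ) (x y : MarkovShift A) : ℝ :=
  if h : x = y then 0 else r ^ firstDiff x y h

/-- Birkhoff sum `S_n f`. -/
def birkhoff (f : MarkovShift A → ℝ) (n : ℕ) (x : MarkovShift A) : ℝ :=
  ∑ j ∈ Finset.range n, f (shift^[j] x)

/-- The set of values `|S_n f x - S_n f y|` over pairs agreeing on the first `m` coordinates. -/
def varSet (f : MarkovShift A → ℝ) (n m : ℕ) : Set ℝ :=
  {c | ∃ x y : MarkovShift A, (∀ i < m, x.1 i = y.1 i) ∧ c = |birkhoff f n x - birkhoff f n y|}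

/-- `Var_m (S_n f)`. -/
noncomputable def varBirk (f : MarkovShift A → ℝ) (n m : ℕ) : ℝ := sSup (varSet f n m)

/-- `Var_1 f < ∞`. -/
def Var1Finite (f : MarkovShift A → ℝ) : Prop := BddAbove (varSet f 1 1)

/-- The set whose supremum is `sup_{n ≥ 1} Var_{n+k}(S_n f)`. -/
def waltersSet (f : MarkovShift A → ℝ) (k : ℕ) : Set ℝ :=
  {c | ∃ n, 1 ≤ n ∧ c ∈ varSet f n (n + k)}

/-- `M_k = sup_{n ≥ 1} Var_{n+k}(S_n f)`. -/
noncomputable def waltersSup (f : MarkovShift A → ℝ) (k : ℕ) : ℝ := sSup (waltersSet f k)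

/-- The Walters condition. -/
def SatisfiesWalters (f : MarkovShift A → ℝ) : Prop :=
  (∀ k, 1 ≤ k → BddAbove (waltersSet f k)) ∧
    Tendsto (fun k => waltersSup f k) atTop (𝓝 0)

/-- The partition function `Z_n(f,a) = Σ_{σ^n x = x, x₀ = a} e^{S_n f (x)}`. -/
noncomputable def partitionSum (f : MarkovShift A → ℝ) (n : ℕ) (a : ℕ) : ℝ :=
  ∑' x : {x : MarkovShift A // shift^[n] x = x ∧ x.1 0 = a}, Real.exp (birkhoff f n x.1)

/-- `f` has (finite) Gurevich pressure `p`. -/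
def HasGurevichPressure (f : MarkovShift A → ℝ) (p : ℝ) : Prop :=
  ∀ a : ℕ, Admissible A a →
    (∀ n, 1 ≤ n → Summable fun x : {x : MarkovShift A // shift^[n] x = x ∧ x.1 0 = a} =>
        Real.exp (birkhoff f n x.1)) ∧
    Tendsto (fun n : ℕ => (1 / (n : ℝ)) * Real.log (partitionSum f n a)) atTop (𝓝 p)

/-- σ-invariant Borel probability measure. -/
def IsInvariantProb (μ : Measure (MarkovShift A)) : Prop :=
  IsProbabilityMeasure μ ∧ μ.map shift = μ

/-- `m(f)`, the maximal ergodic average. -/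
noncomputable def mf (f : MarkovShift A → ℝ) : ℝ :=
  sSup {c | ∃ μ : Measure (MarkovShift A),
    IsInvariantProb μ ∧ Integrable f μ ∧ ∫ x, f x ∂μ = c}

/-- A maximizing measure for `f`. -/
def IsMaximizing (f : MarkovShift A → ℝ) (μ : Measure (MarkovShift A)) : Prop :=
  IsInvariantProb μ ∧ Integrable f μ ∧ ∫ x, f x ∂μ = mf f

/-- Bounded real valued function. -/
def BoundedFun (g : MarkovShift A → ℝ) : Prop := ∃ C, ∀ x, |g x| ≤ C

/-- A bounded calibrated sub-action for `f`. -/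
def IsCalibratedSubaction (f V : MarkovShift A → ℝ) : Prop :=
  Continuous V ∧ BoundedFun V ∧
    (∀ x, f x + V x - V (shift x) - mf f ≤ 0) ∧
    (∀ y, ∃ x, shift x = y ∧ f x + V x - V (shift x) - mf f = 0)

/-- The Ruelle transfer operator `(L_g u)(x) = Σ_{σ y = x} e^{g(y)} u(y)`. -/
noncomputable def ruelle (g u : MarkovShift A → ℝ) (x : MarkovShift A) : ℝ :=
  ∑' y : {y : MarkovShift A // shift y = x}, Real.exp (g y.1) * u y.1

/-- Ruelle-Perron-Frobenius data for the potential `f` with pressure `p`: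
eigenfunction `h`, eigenmeasure `ν`. -/
def IsRPF (f : MarkovShift A → ℝ) (p : ℝ) (h : MarkovShift A → ℝ)
    (ν : Measure (MarkovShift A)) : Prop :=
  Continuous h ∧ (∀ x, 0 < h x) ∧
    (∀ x, ruelle f h x = Real.exp p * h x) ∧
    IsProbabilityMeasure ν ∧
    (∀ g : MarkovShift A → ℝ, Continuous g → BoundedFun g →
      ∫ x, ruelle f g x ∂ν = Real.exp p * ∫ x, g x ∂ν) ∧
    ∫ x, h x ∂ν = 1

/-- The Gibbs measure `dμ = h dν`. -/
noncomputable def gibbs (h : MarkovShift A → ℝ) (ν : Measure (MarkovShift A)) :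
    Measure (MarkovShift A) :=
  ν.withDensity fun x => ENNReal.ofReal (h x)

/-- The Mañé potential `S_f(x,y)` (with respect to the metric of parameter `r`). -/
noncomputable def manePot (r : ℝ) (f : MarkovShift A → ℝ) (x y : MarkovShift A) : EReal :=
  ⨅ ε : {ε : ℝ // 0 < ε}, ⨆ n : {n : ℕ // 1 ≤ n},
    ⨆ _z : {z : MarkovShift A // dist' r x z < ε.1 ∧ shift^[n.1] z = y},
      ((birkhoff (fun w => f w - mf f) n.1 _z.1 : ℝ) : EReal)

/-- The (topological) support of a measure. -/
def msupport (μ : Measure (MarkovShift A)) : Set (MarkovShift A) :=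
  {x | ∀ U : Set (MarkovShift A), IsOpen U → x ∈ U → 0 < μ U}

end MarkovShift

namespace MarkovShift

/-! With `p = P(βf)` and `ψ = βf - p`, the eigenfunction `h` and the eigenmeasure `ν` are fixed by
`L_ψ` and `L_ψ^*`. Finite primitivity and bounded distortion allow every orbit segment to be
continued, within a fixed time `K` and at an energy cost `d`, to any prescribed point. This compares
`L_ψⁿ g` at `x'` with `L_ψⁿ⁺ᴷ g` at `x`, up to the factor `e^d` and replacing `g` by its infima on
`n`-cylinders. Integrating in `x` or in `x'` and letting `n → ∞` gives `h ≥ e^{-d}` and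
`h dν ≤ e^d dν`, while `ν[x₀ … x_{n-1}]` is `e^{S_n ψ(x)}` up to `e^d` and the distortion of `ψ`.
Connecting words have to pay `p` at each step, so `d` is `β` times a constant as soon as `p ≤ βq`
with `q` independent of `β`: this holds when `L_f 1 ≤ e^q`, since then `L_{βf} 1 ≤ e^{βq}`. -/

section

variable {A : ℕ → ℕ → Bool}

/-- The exponential with values in `ℝ≥0∞`, where sums over preimages need no summability. -/
noncomputable def ennexp (t : ℝ) : ℝ≥0∞ := ENNReal.ofReal (Real.exp t)

lemma ennexp_zero : ennexp 0 = 1 := by simp [ennexp]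

lemma ennexp_add (s t : ℝ) : ennexp (s + t) = ennexp s * ennexp t := by
  rw [ennexp, Real.exp_add, ENNReal.ofReal_mul (Real.exp_pos s).le, ennexp, ennexp]

lemma ennexp_neg_mul_ennexp (t : ℝ) : ennexp (-t) * ennexp t = 1 := by
  rw [← ennexp_add, neg_add_cancel, ennexp_zero]

lemma ennexp_le_ennexp {s t : ℝ} : ennexp s ≤ ennexp t ↔ s ≤ t := by
  rw [ennexp, ennexp, ENNReal.ofReal_le_ofReal_iff (Real.exp_pos t).le, Real.exp_le_exp]

lemma ennexp_ne_top (t : ℝ) : ennexp t ≠ ⊤ := ENNReal.ofReal_ne_top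

lemma toReal_ennexp (t : ℝ) : (ennexp t).toReal = Real.exp t :=
  ENNReal.toReal_ofReal (Real.exp_pos t).le

lemma measurable_ennexp : Measurable ennexp :=
  ENNReal.measurable_ofReal.comp Real.measurable_exp

lemma ennexp_sub_le_iff {s t : ℝ} {a : ℝ≥0∞} : ennexp (s - t) ≤ a ↔ ennexp s ≤ ennexp t * a := by
  constructor <;> intro hle
  · calc ennexp s = ennexp t * ennexp (s - t) := by rw [← ennexp_add, add_sub_cancel]
      _ ≤ ennexp t * a := by gcongr
  · calc ennexp (s - t) = ennexp (-t) * ennexp s := by rw [← ennexp_add, neg_add_eq_sub]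
      _ ≤ ennexp (-t) * (ennexp t * a) := by gcongr
      _ = a := by rw [← mul_assoc, ennexp_neg_mul_ennexp, one_mul]

lemma exists_le_ennexp {a : ℝ≥0∞} (ha : a ≠ ⊤) : ∃ t, a ≤ ennexp t := by
  refine ⟨a.toReal, (ENNReal.le_ofReal_iff_toReal_le ha (Real.exp_pos _).le).2 ?_⟩
  linarith [Real.add_one_le_exp a.toReal]

/-! ### Points and cylinders -/

lemma shift_iterate_apply (n : ℕ) (x : MarkovShift A) (i : ℕ) :
    (shift^[n] x).1 i = x.1 (i + n) := by
  induction n generalizing x with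
  | zero => rfl
  | succ _ ih => exact ih (shift x)

lemma eq_of_mem_cylOf_of_shift_iterate_eq {n : ℕ} {x y : MarkovShift A} (hy : y ∈ cylOf x n)
    (hshift : shift^[n] y = shift^[n] x) : y = x := by
  refine Subtype.ext (funext fun i => ?_)
  rcases lt_or_ge i n with hi | hi
  · exact hy i hi
  · obtain ⟨j, rfl⟩ := Nat.exists_eq_add_of_le' hi
    rw [← shift_iterate_apply, ← shift_iterate_apply, hshift]

lemma cylOf_eq_of_mem {n : ℕ} {x y : MarkovShift A} (hy : y ∈ cylOf x n) :
    cylOf y n = cylOf x n :=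
  Set.ext fun _ => forall₂_congr fun i hi => by rw [hy i hi]

lemma isOpen_cylOf (x : MarkovShift A) (n : ℕ) : IsOpen (cylOf x n) :=
  (PiNat.isOpen_cylinder _ x.1 n).preimage continuous_subtype_val

lemma measurableSet_cylOf (x : MarkovShift A) (n : ℕ) : MeasurableSet (cylOf x n) :=
  (isOpen_cylOf x n).measurableSet

lemma exists_cylOf_subset {U : Set (MarkovShift A)} (hU : IsOpen U) {x : MarkovShift A}
    (hx : x ∈ U) : ∃ n, cylOf x n ⊆ U := by
  obtain ⟨V, hV, rfl⟩ := isOpen_induced_iff.1 hU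
  obtain ⟨_, ⟨z, n, rfl⟩, hxz, hzV⟩ :=
    (PiNat.isTopologicalBasis_cylinders _).exists_subset_of_mem_open hx hV
  exact ⟨n, fun y hy => hzV fun i hi => (hy i hi).trans (hxz i hi)⟩

instance : TopologicalSpace.MetrizableSpace (MarkovShift A) :=
  (Topology.IsEmbedding.subtypeVal
    (p := fun x : ℕ → ℕ => ∀ i, A (x i) (x (i + 1)) = true)).metrizableSpace

/-- The point `a x₀ x₁ …`, with junk value `x` when `a x₀` is not an admissible word, so that
`cons a` is defined on the whole space. -/
def cons (a : ℕ) (x : MarkovShift A) : MarkovShift A :=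
  ⟨if A a (x.1 0) = true then fun i => i.casesOn a x.1 else x.1, by
    split_ifs with hax
    · rintro (_ | i)
      exacts [hax, x.2 i]
    · exact x.2⟩

lemma val_cons {a : ℕ} {x : MarkovShift A} (hax : A a (x.1 0) = true) :
    (cons a x).1 = fun i => i.casesOn a x.1 := if_pos hax

lemma cons_apply_zero {a : ℕ} {x : MarkovShift A} (hax : A a (x.1 0) = true) :
    (cons a x).1 0 = a := congrFun (val_cons hax) 0

lemma cons_apply_succ {a : ℕ} {x : MarkovShift A} (hax : A a (x.1 0) = true) (i : ℕ) :
    (cons a x).1 (i + 1) = x.1 i := congrFun (val_cons hax) (i + 1)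

lemma shift_cons {a : ℕ} {x : MarkovShift A} (hax : A a (x.1 0) = true) :
    shift (cons a x) = x :=
  Subtype.ext (funext (cons_apply_succ hax))

lemma cons_shift (x : MarkovShift A) : cons (x.1 0) (shift x) = x := by
  refine Subtype.ext ((val_cons (x.2 0)).trans (funext ?_))
  rintro (_ | i) <;> rfl

lemma continuous_apply_coe (i : ℕ) : Continuous fun x : MarkovShift A => x.1 i :=
  (continuous_apply i).comp continuous_subtype_val

lemma isClopen_setOf_admissible_cons (a : ℕ) :
    IsClopen {x : MarkovShift A | A a (x.1 0) = true} :=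
  (isClopen_discrete {b | A a b = true}).preimage (continuous_apply_coe 0)

lemma continuous_cons (a : ℕ) : Continuous (cons a : MarkovShift A → MarkovShift A) := by
  refine Continuous.subtype_mk (Continuous.if (fun x hx => ?_) ?_ continuous_subtype_val) _
  · exact absurd hx ((isClopen_setOf_admissible_cons a).frontier_eq ▸ Set.notMem_empty x)
  · refine continuous_pi ?_
    rintro (_ | i)
    exacts [continuous_const, continuous_apply_coe i]

/-! ### Birkhoff sums -/

lemma birkhoff_one (f : MarkovShift A → ℝ) (x : MarkovShift A) : birkhoff f 1 x = f x := by
  simp only [birkhoff, Finset.sum_range_one, Function.iterate_zero, id]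

lemma birkhoff_add (f : MarkovShift A → ℝ) (m n : ℕ) (x : MarkovShift A) :
    birkhoff f (m + n) x = birkhoff f m x + birkhoff f n (shift^[m] x) := by
  unfold birkhoff
  rw [Finset.sum_range_add]
  simp only [← Function.iterate_add_apply, add_comm]

lemma birkhoff_mul_sub_const (f : MarkovShift A → ℝ) (β p : ℝ) (n : ℕ) (x : MarkovShift A) :
    birkhoff (fun y => β * f y - p) n x = β * birkhoff f n x - n * p := by
  simp only [birkhoff, Finset.sum_sub_distrib, Finset.mul_sum, Finset.sum_const,
    Finset.card_range, nsmul_eq_mul]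

lemma mul_le_birkhoff {f : MarkovShift A → ℝ} {F : Finset ℕ} {b : ℝ}
    (hb : ∀ x : MarkovShift A, x.1 0 ∈ F → b ≤ f x) {n : ℕ} {x : MarkovShift A}
    (hx : ∀ i < n, x.1 i ∈ F) : n * b ≤ birkhoff f n x := by
  calc n * b = ∑ _j ∈ Finset.range n, b := by simp
    _ ≤ birkhoff f n x := Finset.sum_le_sum fun j hj => hb _ <| by
        rw [shift_iterate_apply, zero_add]
        exact hx j (Finset.mem_range.1 hj)

/-! ### The transfer operator -/

/-- The `n`-th iterate of the Ruelle operator of `ψ` on `ℝ≥0∞`-valued functions,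
`(L_ψⁿ g)(x) = Σ_{σⁿ y = x} e^{S_n ψ(y)} g(y)`. -/
noncomputable def transfer (ψ : MarkovShift A → ℝ) (n : ℕ) (g : MarkovShift A → ℝ≥0∞)
    (x : MarkovShift A) : ℝ≥0∞ :=
  ∑' y : {y : MarkovShift A // shift^[n] y = x}, ennexp (birkhoff ψ n y) * g y

section transfer

variable {ψ : MarkovShift A → ℝ}

lemma transfer_one_apply (ψ : MarkovShift A → ℝ) (g : MarkovShift A → ℝ≥0∞)
    (x : MarkovShift A) :
    transfer ψ 1 g x = ∑' y : {y : MarkovShift A // shift y = x}, ennexp (ψ y) * g y :=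
  tsum_congr fun y => by rw [birkhoff_one]

lemma le_transfer (ψ : MarkovShift A → ℝ) (n : ℕ) (g : MarkovShift A → ℝ≥0∞)
    (y : MarkovShift A) : ennexp (birkhoff ψ n y) * g y ≤ transfer ψ n g (shift^[n] y) :=
  ENNReal.le_tsum (f := fun z : {z : MarkovShift A // shift^[n] z = shift^[n] y} =>
    ennexp (birkhoff ψ n z) * g z) ⟨y, rfl⟩

lemma transfer_add (ψ : MarkovShift A → ℝ) (n : ℕ) (g k : MarkovShift A → ℝ≥0∞) :
    transfer ψ n (g + k) = transfer ψ n g + transfer ψ n k := by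
  funext x
  simp only [transfer, Pi.add_apply, mul_add, ENNReal.tsum_add]

lemma transfer_zero (ψ : MarkovShift A → ℝ) (g : MarkovShift A → ℝ≥0∞) :
    transfer ψ 0 g = g := by
  funext x
  rw [transfer, tsum_eq_single (⟨x, rfl⟩ : {y : MarkovShift A // shift^[0] y = x})
    fun y hy => (hy (Subtype.ext y.2)).elim]
  simp [birkhoff, ennexp_zero]

/-- The `n + 1`-st preimages of `x`, sorted by their images under the shift. -/
def sigmaPreimageEquiv (n : ℕ) (x : MarkovShift A) :
    (Σ z : {z : MarkovShift A // shift^[n] z = x}, {y : MarkovShift A // shift^[1] y = z}) ≃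
      {y : MarkovShift A // shift^[n + 1] y = x} where
  toFun p := ⟨p.2, (congrArg shift^[n] p.2.2).trans p.1.2⟩
  invFun y := ⟨⟨shift y, y.2⟩, y, rfl⟩
  left_inv := by rintro ⟨⟨_, hz⟩, y, hy⟩; cases hy; rfl
  right_inv _ := rfl

lemma transfer_succ (ψ : MarkovShift A → ℝ) (n : ℕ) (g : MarkovShift A → ℝ≥0∞) :
    transfer ψ (n + 1) g = transfer ψ n (transfer ψ 1 g) := by
  funext x
  simp only [transfer, ← ENNReal.tsum_mul_left]
  rw [← (sigmaPreimageEquiv n x).tsum_eq, ENNReal.tsum_sigma']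
  refine tsum_congr fun z => tsum_congr fun y => ?_
  change ennexp (birkhoff ψ (n + 1) y) * g y = _
  rw [add_comm n, birkhoff_add, y.2, add_comm, ennexp_add, mul_assoc]

lemma transfer_eq_self {g : MarkovShift A → ℝ≥0∞} (hg : transfer ψ 1 g = g) (n : ℕ) :
    transfer ψ n g = g := by
  induction n with
  | zero => exact transfer_zero ψ g
  | succ n ih => rw [transfer_succ, hg, ih]

lemma transfer_sub_const (ψ : MarkovShift A → ℝ) (p : ℝ) (g : MarkovShift A → ℝ≥0∞)
    (x : MarkovShift A) :
    transfer (fun y => ψ y - p) 1 g x = ennexp (-p) * transfer ψ 1 g x := by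
  simp only [transfer_one_apply, ← ENNReal.tsum_mul_left, ← mul_assoc, ← ennexp_add,
    neg_add_eq_sub]

/-- The one-step preimages of `x` are the points `a x` with `a x₀` admissible. -/
def preimageEquiv (x : MarkovShift A) :
    {a // A a (x.1 0) = true} ≃ {y : MarkovShift A // shift y = x} where
  toFun a := ⟨cons a x, shift_cons a.2⟩
  invFun y := ⟨y.1.1 0, by obtain ⟨y, rfl⟩ := y; exact y.2 0⟩
  left_inv a := Subtype.ext (cons_apply_zero a.2)
  right_inv := by rintro ⟨y, rfl⟩; exact Subtype.ext (cons_shift y)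

lemma transfer_one_eq_tsum_indicator (ψ : MarkovShift A → ℝ) (g : MarkovShift A → ℝ≥0∞)
    (x : MarkovShift A) :
    transfer ψ 1 g x = ∑' a, {x : MarkovShift A | A a (x.1 0) = true}.indicator
      (fun x => ennexp (ψ (cons a x)) * g (cons a x)) x := by
  rw [transfer_one_apply, ← (preimageEquiv x).tsum_eq]
  exact tsum_subtype {a | A a (x.1 0) = true} fun a => ennexp (ψ (cons a x)) * g (cons a x)

lemma measurable_transfer_one (hψ : Measurable ψ) {g : MarkovShift A → ℝ≥0∞}
    (hg : Measurable g) : Measurable (transfer ψ 1 g) := by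
  rw [funext (transfer_one_eq_tsum_indicator ψ g)]
  refine Measurable.tsum fun a => ?_
  have hcons := (continuous_cons (A := A) a).measurable
  exact ((measurable_ennexp.comp (hψ.comp hcons)).mul (hg.comp hcons)).indicator
    (isClopen_setOf_admissible_cons a).isOpen.measurableSet

lemma transfer_indicator_cylOf_le {n : ℕ} {z : MarkovShift A} {t : ℝ}
    (ht : ∀ y ∈ cylOf z n, birkhoff ψ n y ≤ t) (x : MarkovShift A) :
    transfer ψ n ((cylOf z n).indicator 1) x ≤ ennexp t := by
  by_cases hex : ∃ y ∈ cylOf z n, shift^[n] y = x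
  · obtain ⟨y, hy, rfl⟩ := hex
    rw [transfer, tsum_eq_single ⟨y, rfl⟩]
    · simpa [hy] using ennexp_le_ennexp.2 (ht y hy)
    · intro y' hne
      rw [Set.indicator_of_notMem, mul_zero]
      intro hy'
      rw [← cylOf_eq_of_mem hy] at hy'
      exact hne (Subtype.ext (eq_of_mem_cylOf_of_shift_iterate_eq hy' y'.2))
  · push Not at hex
    rw [transfer, ENNReal.tsum_eq_zero.2]
    · exact zero_le
    · intro y
      rw [Set.indicator_of_notMem fun hy => hex y hy y.2, mul_zero]

lemma transfer_const_mul_le {q : ℝ} (hq : ∀ x, transfer ψ 1 1 x ≤ ennexp q) {β : ℝ}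
    (hβ : 1 ≤ β) (x : MarkovShift A) :
    transfer (fun y => β * ψ y) 1 1 x ≤ ennexp (β * q) := by
  have hψq (y : MarkovShift A) : ψ y ≤ q := by
    have := (le_transfer ψ 1 1 y).trans (hq _)
    rwa [Pi.one_apply, mul_one, birkhoff_one, ennexp_le_ennexp] at this
  calc transfer (fun y => β * ψ y) 1 1 x
      ≤ ∑' y : {y : MarkovShift A // shift y = x}, ennexp ((β - 1) * q) * ennexp (ψ y) := by
        rw [transfer_one_apply]
        refine ENNReal.tsum_le_tsum fun y => ?_
        rw [Pi.one_apply, mul_one, ← ennexp_add, ennexp_le_ennexp]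
        nlinarith [hψq y]
    _ = ennexp ((β - 1) * q) * transfer ψ 1 1 x := by
        simp only [ENNReal.tsum_mul_left, transfer_one_apply, Pi.one_apply, mul_one]
    _ ≤ ennexp ((β - 1) * q) * ennexp q := by gcongr; exact hq x
    _ = ennexp (β * q) := by rw [← ennexp_add]; ring_nf

end transfer

/-! ### Eigenmeasures -/

section dual

variable {ψ : MarkovShift A → ℝ} {ν : Measure (MarkovShift A)}

/-- The measure `L_ψ^* δ_x`, which weights each one-step preimage `y` of `x` by `e^{ψ(y)}`. -/
noncomputable def preimageMeasure (ψ : MarkovShift A → ℝ) (x : MarkovShift A) :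
    Measure (MarkovShift A) :=
  Measure.sum fun y : {y : MarkovShift A // shift y = x} => ennexp (ψ y) • Measure.dirac y.1

lemma lintegral_preimageMeasure (ψ : MarkovShift A → ℝ) (x : MarkovShift A)
    {g : MarkovShift A → ℝ≥0∞} (hg : Measurable g) :
    ∫⁻ y, g y ∂(preimageMeasure ψ x) = transfer ψ 1 g x := by
  simp only [preimageMeasure, lintegral_sum_measure, lintegral_smul_measure, lintegral_dirac' _ hg,
    smul_eq_mul, transfer_one_apply]

lemma measurable_preimageMeasure (hψ : Measurable ψ) : Measurable (preimageMeasure ψ) := by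
  refine Measure.measurable_of_measurable_coe _ fun s hs => ?_
  have hs1 : Measurable (s.indicator (1 : MarkovShift A → ℝ≥0∞)) := measurable_one.indicator hs
  simpa only [← lintegral_indicator_one hs, lintegral_preimageMeasure ψ _ hs1] using
    measurable_transfer_one hψ hs1

/-- The dual operator `L_ψ^*` acting on measures. -/
noncomputable def dual (ψ : MarkovShift A → ℝ) (ν : Measure (MarkovShift A)) :
    Measure (MarkovShift A) :=
  ν.bind (preimageMeasure ψ)

lemma lintegral_dual (hψ : Measurable ψ) (ν : Measure (MarkovShift A)) {g : MarkovShift A → ℝ≥0∞}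
    (hg : Measurable g) : ∫⁻ x, g x ∂(dual ψ ν) = ∫⁻ x, transfer ψ 1 g x ∂ν := by
  rw [dual, Measure.lintegral_bind (measurable_preimageMeasure hψ).aemeasurable hg.aemeasurable]
  simp only [lintegral_preimageMeasure ψ _ hg]

lemma lintegral_transfer (hψ : Measurable ψ) (hν : dual ψ ν = ν) (n : ℕ)
    {g : MarkovShift A → ℝ≥0∞} (hg : Measurable g) :
    ∫⁻ x, transfer ψ n g x ∂ν = ∫⁻ x, g x ∂ν := by
  induction n generalizing g with
  | zero => rw [transfer_zero]
  | succ n ih =>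
    rw [transfer_succ, ih (measurable_transfer_one hψ hg), ← lintegral_dual hψ ν hg, hν]

lemma dual_univ_le [IsProbabilityMeasure ν] (hψ : Measurable ψ) {M : ℝ}
    (hM : ∀ x, transfer ψ 1 1 x ≤ ennexp M) : dual ψ ν Set.univ ≤ ennexp M :=
  calc dual ψ ν Set.univ = ∫⁻ x, transfer ψ 1 1 x ∂ν := by
        rw [← lintegral_dual hψ ν measurable_one, Pi.one_def, lintegral_one]
    _ ≤ ∫⁻ _, ennexp M ∂ν := lintegral_mono hM
    _ = ennexp M := by rw [lintegral_const, measure_univ, mul_one]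

lemma dual_sub_const (hψ : Measurable ψ) (p : ℝ) (ν : Measure (MarkovShift A)) :
    dual (fun y => ψ y - p) ν = ennexp (-p) • dual ψ ν := by
  refine Measure.ext_of_lintegral _ fun g hg => ?_
  rw [lintegral_dual (hψ.sub_const p) ν hg, lintegral_smul_measure, lintegral_dual hψ ν hg,
    smul_eq_mul, ← lintegral_const_mul _ (measurable_transfer_one hψ hg)]
  exact lintegral_congr (transfer_sub_const ψ p g)

end dual

/-! ### Approximation from below by cylinder functions -/

section cylInf

variable {g : MarkovShift A → ℝ≥0∞}

/-- The infimum of `g` over the `n`-cylinder of a point: the largest function below `g` that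
depends only on the first `n` coordinates. -/
noncomputable def cylInf (g : MarkovShift A → ℝ≥0∞) (n : ℕ) (x : MarkovShift A) : ℝ≥0∞ :=
  ⨅ y ∈ cylOf x n, g y

lemma cylInf_le_of_mem (g : MarkovShift A → ℝ≥0∞) {n : ℕ} {x y : MarkovShift A}
    (hy : y ∈ cylOf x n) : cylInf g n x ≤ g y :=
  iInf₂_le y hy

lemma cylInf_le (g : MarkovShift A → ℝ≥0∞) (n : ℕ) : cylInf g n ≤ g :=
  fun _ => cylInf_le_of_mem g fun _ _ => rfl

lemma cylInf_mono (g : MarkovShift A → ℝ≥0∞) : Monotone (cylInf g) :=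
  fun _ _ hmn _ => le_iInf₂ fun _ hy => cylInf_le_of_mem g fun i hi => hy i (hi.trans_le hmn)

lemma measurable_cylInf (g : MarkovShift A → ℝ≥0∞) (n : ℕ) : Measurable (cylInf g n) := by
  have hloc : IsLocallyConstant (cylInf g n) :=
    (IsLocallyConstant.iff_exists_open _).2 fun x =>
      ⟨cylOf x n, isOpen_cylOf x n, fun _ _ => rfl, fun y hy => by
        simp only [cylInf, cylOf_eq_of_mem hy]⟩
  exact hloc.continuous.measurable

lemma iSup_cylInf (hg : Continuous g) : ⨆ n, cylInf g n = g := by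
  refine le_antisymm (iSup_le (cylInf_le g)) fun x => le_of_forall_lt fun c hc => ?_
  obtain ⟨c', hcc', hc'⟩ := exists_between hc
  obtain ⟨n, hn⟩ := exists_cylOf_subset (isOpen_Ioi.preimage hg) (Set.mem_preimage.2 hc')
  calc c < c' := hcc'
    _ ≤ cylInf g n x := le_iInf₂ fun y hy => (hn hy).le
    _ ≤ (⨆ n, cylInf g n) x := le_iSup (cylInf g) n x

lemma tendsto_lintegral_cylInf (hg : Continuous g) (ν : Measure (MarkovShift A)) :
    Tendsto (fun n => ∫⁻ x, cylInf g n x ∂ν) atTop (𝓝 (∫⁻ x, g x ∂ν)) := by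
  have hsup : ∫⁻ x, g x ∂ν = ⨆ n, ∫⁻ x, cylInf g n x ∂ν := by
    rw [← lintegral_iSup (measurable_cylInf g) (cylInf_mono g)]
    simp only [← iSup_apply, iSup_cylInf hg]
  rw [hsup]
  exact tendsto_atTop_iSup fun m n hmn => lintegral_mono (cylInf_mono g hmn)

end cylInf

/-! ### The Gibbs property -/

/-- Specification with gap `K`, with energy cost `d`: every orbit segment of length `n` can be
continued to land on any prescribed point at time `n + K` while its Birkhoff sum drops by at most
`d`. -/
def HasSpecification (ψ : MarkovShift A → ℝ) (K : ℕ) (d : ℝ) : Prop :=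
  ∀ n (z x : MarkovShift A), ∃ y ∈ cylOf z n,
    shift^[n + K] y = x ∧ birkhoff ψ n z ≤ birkhoff ψ (n + K) y + d

/-- Bowen's condition with constant `C`, which is one-sided because `y ∈ cylOf x n` is a symmetric
relation. -/
def BoundedDistortion (f : MarkovShift A → ℝ) (C : ℝ) : Prop :=
  ∀ n (x : MarkovShift A), ∀ y ∈ cylOf x n, birkhoff f n y ≤ birkhoff f n x + C

section gibbs

variable {ψ : MarkovShift A → ℝ} {ν : Measure (MarkovShift A)} {c d : ℝ} {K : ℕ}

/- Specification sends each `n`-preimage of `x'` to an `(n + K)`-preimage of `x` in the same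
cylinder, and does so injectively because an `n`-preimage of `x'` is determined by its cylinder. -/
lemma HasSpecification.transfer_cylInf_le (hs : HasSpecification ψ K d)
    (g : MarkovShift A → ℝ≥0∞) (n : ℕ) (x x' : MarkovShift A) :
    transfer ψ n (cylInf g n) x' ≤ ennexp d * transfer ψ (n + K) g x := by
  choose y hycyl hyshift hybirk using fun z => hs n z x
  let continuation : {z : MarkovShift A // shift^[n] z = x'} →
      {y : MarkovShift A // shift^[n + K] y = x} := fun z => ⟨y z, hyshift z⟩
  have hinj : Function.Injective continuation := by
    intro z z' heq
    have hyy : y z = y z' := congrArg Subtype.val heq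
    have hmem : (z : MarkovShift A) ∈ cylOf z'.1 n := fun i hi =>
      (hycyl z i hi).symm.trans (hyy ▸ hycyl z' i hi)
    exact Subtype.ext (eq_of_mem_cylOf_of_shift_iterate_eq hmem (z.2.trans z'.2.symm))
  calc transfer ψ n (cylInf g n) x'
      ≤ ∑' z, ennexp d * (ennexp (birkhoff ψ (n + K) (continuation z)) * g (continuation z)) := by
        refine ENNReal.tsum_le_tsum fun z => ?_
        rw [← mul_assoc, ← ennexp_add]
        gcongr
        · exact ennexp_le_ennexp.2 (add_comm d _ ▸ hybirk z)
        · exact cylInf_le_of_mem g (hycyl z)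
    _ ≤ ennexp d * transfer ψ (n + K) g x := by
        rw [ENNReal.tsum_mul_left]
        gcongr
        exact ENNReal.tsum_comp_le_tsum_of_injective hinj
          fun y => ennexp (birkhoff ψ (n + K) y) * g y

lemma HasSpecification.transfer_cylInf_le_lintegral (hs : HasSpecification ψ K d)
    [IsProbabilityMeasure ν] (hψ : Measurable ψ) (hν : dual ψ ν = ν) {g : MarkovShift A → ℝ≥0∞}
    (hg : Measurable g) (n : ℕ) (x' : MarkovShift A) :
    transfer ψ n (cylInf g n) x' ≤ ennexp d * ∫⁻ x, g x ∂ν :=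
  calc transfer ψ n (cylInf g n) x' = ∫⁻ _, transfer ψ n (cylInf g n) x' ∂ν := by
        rw [lintegral_const, measure_univ, mul_one]
    _ ≤ ∫⁻ x, ennexp d * transfer ψ (n + K) g x ∂ν :=
        lintegral_mono fun x => hs.transfer_cylInf_le g n x x'
    _ = ennexp d * ∫⁻ x, g x ∂ν := by
        rw [lintegral_const_mul' _ _ (ennexp_ne_top d), lintegral_transfer hψ hν (n + K) hg]

lemma HasSpecification.ennexp_le_measure_cylOf (hs : HasSpecification ψ K d)
    [IsProbabilityMeasure ν] (hψ : Measurable ψ) (hν : dual ψ ν = ν) (z : MarkovShift A) (n : ℕ) :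
    ennexp (birkhoff ψ n z) ≤ ennexp d * ν (cylOf z n) := by
  have hinf : 1 ≤ cylInf ((cylOf z n).indicator 1) n z :=
    le_iInf₂ fun y hy => by rw [Set.indicator_of_mem hy, Pi.one_apply]
  calc ennexp (birkhoff ψ n z)
      ≤ ennexp (birkhoff ψ n z) * cylInf ((cylOf z n).indicator 1) n z :=
        le_mul_of_one_le_right' hinf
    _ ≤ transfer ψ n (cylInf ((cylOf z n).indicator 1) n) (shift^[n] z) := le_transfer ψ n _ z
    _ ≤ ennexp d * ∫⁻ x, (cylOf z n).indicator 1 x ∂ν :=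
        hs.transfer_cylInf_le_lintegral hψ hν
          (measurable_one.indicator (measurableSet_cylOf z n)) n _
    _ = ennexp d * ν (cylOf z n) := by rw [lintegral_indicator_one (measurableSet_cylOf z n)]

lemma BoundedDistortion.measure_cylOf_le (hc : BoundedDistortion ψ c) [IsProbabilityMeasure ν]
    (hψ : Measurable ψ) (hν : dual ψ ν = ν) (z : MarkovShift A) (n : ℕ) :
    ν (cylOf z n) ≤ ennexp (birkhoff ψ n z + c) :=
  calc ν (cylOf z n) = ∫⁻ x, transfer ψ n ((cylOf z n).indicator 1) x ∂ν := by
        rw [lintegral_transfer hψ hν n (measurable_one.indicator (measurableSet_cylOf z n)),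
          lintegral_indicator_one (measurableSet_cylOf z n)]
    _ ≤ ∫⁻ _, ennexp (birkhoff ψ n z + c) ∂ν :=
        lintegral_mono (transfer_indicator_cylOf_le (hc n z))
    _ = ennexp (birkhoff ψ n z + c) := by rw [lintegral_const, measure_univ, mul_one]

variable {H : MarkovShift A → ℝ≥0∞}

lemma HasSpecification.one_le_eigenfunction (hs : HasSpecification ψ K d) (hψ : Measurable ψ)
    (hν : dual ψ ν = ν) (hH : Continuous H) (hfix : transfer ψ 1 H = H)
    (hone : ∫⁻ x, H x ∂ν = 1) [IsProbabilityMeasure ν] (x : MarkovShift A) :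
    1 ≤ ennexp d * H x := by
  refine le_of_tendsto (hone ▸ tendsto_lintegral_cylInf hH ν) (Eventually.of_forall fun n => ?_)
  calc ∫⁻ x', cylInf H n x' ∂ν = ∫⁻ x', transfer ψ n (cylInf H n) x' ∂ν :=
        (lintegral_transfer hψ hν n (measurable_cylInf H n)).symm
    _ ≤ ∫⁻ _, ennexp d * transfer ψ (n + K) H x ∂ν :=
        lintegral_mono (hs.transfer_cylInf_le H n x)
    _ = ennexp d * H x := by
        rw [transfer_eq_self hfix, lintegral_const, measure_univ, mul_one]

/- The transfer operator turns the part `cylInf H n` of `H` into a function bounded by `e^d` and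
preserves the integral of the remainder, which tends to `0`. -/
lemma HasSpecification.setLIntegral_eigenfunction_le (hs : HasSpecification ψ K d)
    [IsProbabilityMeasure ν] (hψ : Measurable ψ) (hν : dual ψ ν = ν) (hH : Continuous H)
    (hfix : transfer ψ 1 H = H) (hone : ∫⁻ x, H x ∂ν = 1) (B : Set (MarkovShift A)) :
    ∫⁻ x in B, H x ∂ν ≤ ennexp d * ν B := by
  have hle (n : ℕ) : ∫⁻ x, cylInf H n x ∂ν ≤ 1 := hone ▸ lintegral_mono (cylInf_le H n)
  have hrem (n : ℕ) : ∫⁻ x, (H - cylInf H n) x ∂ν = 1 - ∫⁻ x, cylInf H n x ∂ν := by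
    rw [← hone]
    exact lintegral_sub (measurable_cylInf H n) (ne_top_of_le_ne_top ENNReal.one_ne_top (hle n))
      (Eventually.of_forall (cylInf_le H n))
  have hdecomp (n : ℕ) (x : MarkovShift A) : H x ≤ ennexp d + transfer ψ n (H - cylInf H n) x :=
    calc H x = transfer ψ n (cylInf H n + (H - cylInf H n)) x := by
          rw [add_tsub_cancel_of_le (cylInf_le H n), transfer_eq_self hfix]
      _ = transfer ψ n (cylInf H n) x + transfer ψ n (H - cylInf H n) x := by
          rw [transfer_add, Pi.add_apply]
      _ ≤ ennexp d + transfer ψ n (H - cylInf H n) x := by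
          gcongr
          simpa only [hone, mul_one] using
            hs.transfer_cylInf_le_lintegral hψ hν hH.measurable n x
  have hbound (n : ℕ) : ∫⁻ x in B, H x ∂ν ≤ ennexp d * ν B + (1 - ∫⁻ x, cylInf H n x ∂ν) :=
    calc ∫⁻ x in B, H x ∂ν ≤ ∫⁻ x in B, (ennexp d + transfer ψ n (H - cylInf H n) x) ∂ν :=
          lintegral_mono (hdecomp n)
      _ = ennexp d * ν B + ∫⁻ x in B, transfer ψ n (H - cylInf H n) x ∂ν := by
          rw [lintegral_add_left measurable_const, setLIntegral_const]
      _ ≤ ennexp d * ν B + ∫⁻ x, transfer ψ n (H - cylInf H n) x ∂ν := by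
          gcongr
          exact Measure.restrict_le_self
      _ = ennexp d * ν B + (1 - ∫⁻ x, cylInf H n x ∂ν) := by
          rw [lintegral_transfer hψ hν n (hH.measurable.sub (measurable_cylInf H n)), hrem]
  have hlim : Tendsto (fun n => ennexp d * ν B + (1 - ∫⁻ x, cylInf H n x ∂ν)) atTop
      (𝓝 (ennexp d * ν B + (1 - 1))) :=
    tendsto_const_nhds.add (ENNReal.Tendsto.sub tendsto_const_nhds
      (hone ▸ tendsto_lintegral_cylInf hH ν) (Or.inl ENNReal.one_ne_top))
  rw [tsub_self, add_zero] at hlim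
  exact ge_of_tendsto' hlim hbound

lemma HasSpecification.gibbs_property (hs : HasSpecification ψ K d) (hc : BoundedDistortion ψ c)
    [IsProbabilityMeasure ν] (hψ : Measurable ψ) (hν : dual ψ ν = ν) (hH : Continuous H)
    (hfix : transfer ψ 1 H = H) (hone : ∫⁻ x, H x ∂ν = 1) (z : MarkovShift A) (n : ℕ) :
    ennexp (birkhoff ψ n z - (d + d)) ≤ ∫⁻ x in cylOf z n, H x ∂ν ∧
      ∫⁻ x in cylOf z n, H x ∂ν ≤ ennexp (birkhoff ψ n z + (c + d)) := by
  constructor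
  · refine ennexp_sub_le_iff.2 ?_
    calc ennexp (birkhoff ψ n z) ≤ ennexp d * ν (cylOf z n) :=
          hs.ennexp_le_measure_cylOf hψ hν z n
      _ ≤ ennexp d * ∫⁻ x in cylOf z n, ennexp d * H x ∂ν := by
          gcongr
          rw [← setLIntegral_one]
          exact lintegral_mono (hs.one_le_eigenfunction hψ hν hH hfix hone)
      _ = ennexp (d + d) * ∫⁻ x in cylOf z n, H x ∂ν := by
          rw [lintegral_const_mul' _ _ (ennexp_ne_top d), ennexp_add, mul_assoc]
  · calc ∫⁻ x in cylOf z n, H x ∂ν ≤ ennexp d * ν (cylOf z n) :=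
          hs.setLIntegral_eigenfunction_le hψ hν hH hfix hone _
      _ ≤ ennexp d * ennexp (birkhoff ψ n z + c) := by
          gcongr
          exact hc.measure_cylOf_le hψ hν z n
      _ = ennexp (birkhoff ψ n z + (c + d)) := by rw [← ennexp_add]; ring_nf

end gibbs

/-! ### Ruelle–Perron–Frobenius data -/

section IsRPF

variable {φ h : MarkovShift A → ℝ} {ν : Measure (MarkovShift A)} {p M : ℝ}

lemma ruelle_eq_toReal_transfer (φ : MarkovShift A → ℝ) {g : MarkovShift A → ℝ}
    (hg : ∀ x, 0 ≤ g x) (x : MarkovShift A) :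
    ruelle φ g x = (transfer φ 1 (fun y => ENNReal.ofReal (g y)) x).toReal := by
  rw [transfer_one_apply, ENNReal.tsum_toReal_eq
    fun y => ENNReal.mul_ne_top (ennexp_ne_top _) ENNReal.ofReal_ne_top]
  exact tsum_congr fun y => by
    rw [ENNReal.toReal_mul, toReal_ennexp, ENNReal.toReal_ofReal (hg y)]

lemma IsRPF.transfer_eigenfunction (hR : IsRPF φ p h ν) (x : MarkovShift A) :
    transfer φ 1 (fun y => ENNReal.ofReal (h y)) x = ennexp p * ENNReal.ofReal (h x) := by
  obtain ⟨-, hpos, heig, -⟩ := hR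
  have hreal : (transfer φ 1 (fun y => ENNReal.ofReal (h y)) x).toReal = Real.exp p * h x := by
    rw [← ruelle_eq_toReal_transfer φ fun y => (hpos y).le, heig]
  have hne : transfer φ 1 (fun y => ENNReal.ofReal (h y)) x ≠ ⊤ := fun htop =>
    (mul_pos (Real.exp_pos p) (hpos x)).ne (by rw [← hreal, htop, ENNReal.toReal_top])
  rw [← ENNReal.ofReal_toReal hne, hreal, ENNReal.ofReal_mul (Real.exp_pos p).le, ennexp]

lemma IsRPF.lintegral_eigenfunction (hR : IsRPF φ p h ν) : ∫⁻ x, ENNReal.ofReal (h x) ∂ν = 1 := by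
  obtain ⟨-, hpos, -, -, -, hone⟩ := hR
  have hintegrable : Integrable h ν := not_imp_comm.1 integral_undef (hone ▸ one_ne_zero)
  rw [← ofReal_integral_eq_lintegral_ofReal hintegrable
    (Eventually.of_forall fun x => (hpos x).le), hone, ENNReal.ofReal_one]

/- Both measures are finite, so testing them on bounded continuous functions is enough. -/
lemma IsRPF.dual_eq (hR : IsRPF φ p h ν) (hφ : Measurable φ)
    (hM : ∀ x, transfer φ 1 1 x ≤ ennexp M) : dual φ ν = ennexp p • ν := by
  obtain ⟨-, -, -, hprob, hdual, -⟩ := hR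
  have : IsFiniteMeasure (dual φ ν) :=
    ⟨(dual_univ_le hφ hM).trans_lt (ennexp_ne_top M).lt_top⟩
  have : IsFiniteMeasure (ennexp p • ν) := ν.smul_finite (ennexp_ne_top p)
  refine ext_of_forall_lintegral_eq_of_IsFiniteMeasure fun u => ?_
  have hu : Measurable fun x => (u x : ℝ≥0∞) := u.continuous.measurable.coe_nnreal_ennreal
  have hL : ∫⁻ x, transfer φ 1 (fun y => u y) x ∂ν ≠ ⊤ := by
    rw [← lintegral_dual hφ ν hu]
    exact (u.lintegral_lt_top_of_nnreal _).ne
  have hbdd : BoundedFun fun x => (u x : ℝ) := by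
    obtain ⟨C, hC⟩ := u.isBounded_range.bddAbove
    exact ⟨C, fun x => by
      rw [abs_of_nonneg (u x).coe_nonneg]
      exact NNReal.coe_le_coe.2 (hC ⟨x, rfl⟩)⟩
  have hruelle : ∫ x, ruelle φ (fun y => u y) x ∂ν =
      (∫⁻ x, transfer φ 1 (fun y => u y) x ∂ν).toReal := by
    rw [← integral_toReal (measurable_transfer_one hφ hu).aemeasurable
      (ae_lt_top (measurable_transfer_one hφ hu) hL)]
    simp only [ruelle_eq_toReal_transfer φ fun y => (u y).coe_nonneg, ENNReal.ofReal_coe_nnreal]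
  rw [lintegral_dual hφ ν hu, lintegral_smul_measure, smul_eq_mul, ← ENNReal.toReal_eq_toReal_iff'
    hL (ENNReal.mul_ne_top (ennexp_ne_top p) (u.lintegral_lt_top_of_nnreal ν).ne), ← hruelle,
    hdual (fun x => u x) (NNReal.continuous_coe.comp u.continuous) hbdd, ENNReal.toReal_mul,
    toReal_ennexp, u.toReal_lintegral_coe_eq_integral]

lemma IsRPF.le_of_transfer_one_le (hR : IsRPF φ p h ν) (hφ : Measurable φ)
    (hM : ∀ x, transfer φ 1 1 x ≤ ennexp M) : p ≤ M := by
  have : IsProbabilityMeasure ν := hR.2.2.2.1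
  simpa only [hR.dual_eq hφ hM, Measure.smul_apply, measure_univ, smul_eq_mul, mul_one,
    ennexp_le_ennexp] using dual_univ_le (ν := ν) hφ hM

lemma IsRPF.dual_sub_eq_self (hR : IsRPF φ p h ν) (hφ : Measurable φ)
    (hM : ∀ x, transfer φ 1 1 x ≤ ennexp M) : dual (fun x => φ x - p) ν = ν := by
  rw [dual_sub_const hφ, hR.dual_eq hφ hM, smul_smul, ennexp_neg_mul_ennexp, one_smul]

lemma IsRPF.transfer_sub_eigenfunction (hR : IsRPF φ p h ν) :
    transfer (fun x => φ x - p) 1 (fun x => ENNReal.ofReal (h x)) =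
      fun x => ENNReal.ofReal (h x) := by
  funext x
  rw [transfer_sub_const, hR.transfer_eigenfunction, ← mul_assoc, ennexp_neg_mul_ennexp, one_mul]

lemma IsRPF.gibbs_div_mem_Icc (hR : IsRPF φ p h ν) (hφ : Measurable φ)
    (hM : ∀ x, transfer φ 1 1 x ≤ ennexp M) {K : ℕ} {c d : ℝ}
    (hs : HasSpecification (fun x => φ x - p) K d)
    (hc : BoundedDistortion (fun x => φ x - p) c) (x : MarkovShift A) (m : ℕ) :
    (gibbs h ν (cylOf x m)).toReal / Real.exp (birkhoff (fun x => φ x - p) m x) ∈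
      Set.Icc (Real.exp (-(d + d))) (Real.exp (c + d)) := by
  have : IsProbabilityMeasure ν := hR.2.2.2.1
  obtain ⟨hlower, hupper⟩ := hs.gibbs_property hc (hφ.sub_const p) (hR.dual_sub_eq_self hφ hM)
    (ENNReal.continuous_ofReal.comp hR.1) hR.transfer_sub_eigenfunction
    hR.lintegral_eigenfunction x m
  simp only [← withDensity_apply _ (measurableSet_cylOf x m)] at hlower hupper
  have hfin := ne_top_of_le_ne_top (ennexp_ne_top _) hupper
  rw [Set.mem_Icc, le_div_iff₀ (Real.exp_pos _), div_le_iff₀ (Real.exp_pos _), ← Real.exp_add,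
    ← Real.exp_add, neg_add_eq_sub, add_comm (c + d)]
  exact ⟨(ENNReal.ofReal_le_iff_le_toReal hfin).1 hlower,
    ENNReal.toReal_le_of_le_ofReal (Real.exp_pos _).le hupper⟩

end IsRPF

/-! ### Finite primitivity -/

section ConnectsThrough

variable {K : ℕ} {F : Finset ℕ}

/-- Every admissible symbol can be joined to every point by a word of `K` symbols of `F`. This is
`FinitelyPrimitive` with its constants made explicit and its words replaced by points. -/
def ConnectsThrough (A : ℕ → ℕ → Bool) (K : ℕ) (F : Finset ℕ) : Prop :=
  ∀ a, Admissible A a → ∀ x : MarkovShift A,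
    ∃ y : MarkovShift A, y.1 0 = a ∧ shift^[K + 1] y = x ∧ ∀ i < K, y.1 (i + 1) ∈ F

lemma exists_prepend_word (x : MarkovShift A) (w : List ℕ) (a : ℕ)
    (hw : List.IsChain (fun u v => A u v = true) (a :: (w ++ [x.1 0]))) :
    ∃ y : MarkovShift A, y.1 0 = a ∧ shift^[w.length + 1] y = x ∧
      ∀ i < w.length, y.1 (i + 1) ∈ w := by
  induction w generalizing a with
  | nil =>
    have hax : A a (x.1 0) = true := (List.isChain_cons_cons.1 hw).1
    exact ⟨cons a x, cons_apply_zero hax, shift_cons hax, fun _ hi => (Nat.not_lt_zero _ hi).elim⟩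
  | cons b w ih =>
    obtain ⟨hab, hw⟩ := List.isChain_cons_cons.1 hw
    obtain ⟨y, rfl, hyx, hyw⟩ := ih b hw
    refine ⟨cons a y, cons_apply_zero hab, ?_, ?_⟩
    · rw [Function.iterate_succ_apply, shift_cons hab]
      exact hyx
    · rintro (_ | i) hi <;> rw [cons_apply_succ hab]
      · exact List.mem_cons_self
      · exact List.mem_cons_of_mem _ (hyw i (Nat.lt_of_succ_lt_succ hi))

lemma FinitelyPrimitive.exists_connectsThrough (hA : FinitelyPrimitive A) :
    ∃ K F, ConnectsThrough A K F := by
  obtain ⟨K, F, hKF⟩ := hA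
  refine ⟨K, F, fun a ha x => ?_⟩
  obtain ⟨w, rfl, hwF, hw⟩ := hKF a (x.1 0) ha ⟨x, rfl⟩
  obtain ⟨y, hya, hyx, hyw⟩ := exists_prepend_word x w a hw
  exact ⟨y, hya, hyx, fun i hi => hwF _ (hyw i hi)⟩

lemma exists_splice (n : ℕ) {z y : MarkovShift A} (hzy : y.1 0 = z.1 n) :
    ∃ y' ∈ cylOf z (n + 1), shift^[n] y' = y := by
  induction n generalizing z with
  | zero => exact ⟨y, fun i hi => by rw [Nat.lt_one_iff.1 hi, hzy], rfl⟩
  | succ n ih =>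
    obtain ⟨y', hy'z, hy'⟩ := ih (z := shift z) hzy
    have hadm : A (z.1 0) (y'.1 0) = true := by
      rw [hy'z 0 n.succ_pos]
      exact z.2 0
    refine ⟨cons (z.1 0) y', ?_, by rw [Function.iterate_succ_apply, shift_cons hadm, hy']⟩
    rintro (_ | i) hi
    · exact cons_apply_zero hadm
    · rw [cons_apply_succ hadm]
      exact hy'z i (Nat.lt_of_succ_lt_succ hi)

lemma ConnectsThrough.exists_glue (hK : ConnectsThrough A K F) (n : ℕ) (z x : MarkovShift A) :
    ∃ y ∈ cylOf z n, shift^[n + K] y = x ∧ ∀ i < K, (shift^[n] y).1 i ∈ F := by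
  cases n with
  | zero =>
    obtain ⟨y, -, hyx, hyF⟩ := hK (z.1 0) ⟨z, rfl⟩ x
    exact ⟨shift y, fun _ hi => (Nat.not_lt_zero _ hi).elim, by rw [zero_add]; exact hyx, hyF⟩
  | succ n =>
    obtain ⟨y, hyz, hyx, hyF⟩ :=
      hK (z.1 n) ⟨shift^[n] z, by rw [shift_iterate_apply, zero_add]⟩ x
    obtain ⟨y', hy'z, hy'⟩ := exists_splice n hyz
    refine ⟨y', hy'z, ?_, fun i hi => ?_⟩
    · rw [add_right_comm, add_assoc, add_comm n, Function.iterate_add_apply, hy', hyx]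
    · rw [Function.iterate_succ_apply', hy']
      exact hyF i hi

lemma exists_periodic_of_return {z : MarkovShift A} {N : ℕ} (hN : 0 < N)
    (hz : z.1 N = z.1 0) : ∃ y ∈ cylOf z N, shift^[N] y = y := by
  have hstep (i : ℕ) : z.1 ((i + 1) % N) = z.1 (i % N + 1) := by
    rw [← Nat.mod_add_mod]
    have hle : i % N + 1 ≤ N := Nat.mod_lt i hN
    rcases hle.eq_or_lt with heq | hlt
    · rw [heq, Nat.mod_self, hz]
    · rw [Nat.mod_eq_of_lt hlt]
  have hadm (i : ℕ) : A (z.1 (i % N)) (z.1 ((i + 1) % N)) = true := by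
    rw [hstep]
    exact z.2 _
  refine ⟨⟨fun i => z.1 (i % N), hadm⟩, fun i hi => ?_, ?_⟩
  · exact congrArg z.1 (Nat.mod_eq_of_lt hi)
  · refine Subtype.ext (funext fun i => (shift_iterate_apply _ _ _).trans ?_)
    exact congrArg z.1 (Nat.add_mod_right i N)

lemma ConnectsThrough.exists_periodic (hK : ConnectsThrough A K F) {a b : ℕ}
    (ha : Admissible A a) (hb : Admissible A b) :
    ∃ y : MarkovShift A, shift^[K + 1 + (1 + K)] y = y ∧ y.1 0 = a ∧ y.1 (K + 1) = b ∧
      (∀ i < K, y.1 (i + 1) ∈ F) ∧ ∀ i < K, y.1 (i + 1 + (K + 1)) ∈ F := by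
  obtain ⟨x, hxa⟩ := id ha
  obtain ⟨u, hub, hux, huF⟩ := hK b hb x
  obtain ⟨z, hza, hzu, hzF⟩ := hK a ha u
  have hzi (i : ℕ) : z.1 (i + (K + 1)) = u.1 i := by rw [← shift_iterate_apply, hzu]
  have hreturn : z.1 (K + 1 + (1 + K)) = z.1 0 := by
    rw [add_comm 1, hzi, ← zero_add (K + 1), ← shift_iterate_apply, hux, hxa, hza]
  obtain ⟨y, hyz, hy⟩ := exists_periodic_of_return (by lia) hreturn
  refine ⟨y, hy, ?_, ?_, fun i hi => ?_, fun i hi => ?_⟩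
  · rw [hyz 0 (by lia), hza]
  · rw [hyz _ (by lia), ← zero_add (K + 1), hzi, hub]
  · rw [hyz _ (by lia)]
    exact hzF i hi
  · rw [hyz _ (by lia), hzi]
    exact huF i hi

end ConnectsThrough

/-! ### Distortion -/

section distortion

variable {f : MarkovShift A → ℝ} {K : ℕ} {F : Finset ℕ} {B C : ℝ}

lemma SatisfiesWalters.continuous (hf : SatisfiesWalters f) : Continuous f := by
  refine continuous_iff_continuousAt.2 fun x => Metric.tendsto_nhds.2 fun ε hε => ?_
  obtain ⟨k, hkε, hk⟩ := ((hf.2.eventually (gt_mem_nhds hε)).and (eventually_ge_atTop 1)).exists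
  filter_upwards [(isOpen_cylOf x (1 + k)).mem_nhds fun _ _ => rfl] with y hy
  calc dist (f y) (f x) = |birkhoff f 1 y - birkhoff f 1 x| := by
        rw [birkhoff_one, birkhoff_one, Real.dist_eq]
    _ ≤ waltersSup f k := le_csSup (hf.1 k hk) ⟨1, le_rfl, y, x, hy, rfl⟩
    _ < ε := hkε

lemma SatisfiesWalters.exists_boundedDistortion (hf : SatisfiesWalters f) (hvar : Var1Finite f) :
    ∃ C, BoundedDistortion f C := by
  obtain ⟨C₁, hC₁⟩ := hf.1 1 le_rfl
  obtain ⟨C₂, hC₂⟩ := hvar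
  have hinit (n : ℕ) {x y : MarkovShift A} (hy : y ∈ cylOf x (n + 1)) :
      birkhoff f n y ≤ birkhoff f n x + |C₁| := by
    rcases n.eq_zero_or_pos with rfl | hn
    · simp only [birkhoff, Finset.sum_range_zero, zero_add, abs_nonneg]
    · linarith [le_abs_self (birkhoff f n y - birkhoff f n x), hC₁ ⟨n, hn, y, x, hy, rfl⟩,
        le_abs_self C₁]
  have hlast {x y : MarkovShift A} (hy : y ∈ cylOf x 1) :
      birkhoff f 1 y ≤ birkhoff f 1 x + |C₂| := by
    linarith [le_abs_self (birkhoff f 1 y - birkhoff f 1 x), hC₂ ⟨y, x, hy, rfl⟩, le_abs_self C₂]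
  refine ⟨|C₁| + |C₂|, fun n x y hy => ?_⟩
  cases n with
  | zero =>
    simp only [birkhoff, Finset.sum_range_zero, zero_add]
    positivity
  | succ n =>
    have hshift : shift^[n] y ∈ cylOf (shift^[n] x) 1 := fun i hi => by
      simpa only [shift_iterate_apply] using hy (i + n) (by lia)
    rw [birkhoff_add, birkhoff_add]
    linarith [hinit n hy, hlast hshift]

lemma BoundedDistortion.mul_sub_const (hC : BoundedDistortion f C) {β : ℝ} (hβ : 0 ≤ β) (p : ℝ) :
    BoundedDistortion (fun x => β * f x - p) (β * C) := by
  intro n x y hy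
  rw [birkhoff_mul_sub_const, birkhoff_mul_sub_const]
  linarith [mul_le_mul_of_nonneg_left (hC n x y hy) hβ]

lemma BoundedDistortion.le_add_of_apply_zero_eq (hC : BoundedDistortion f C)
    {x y : MarkovShift A} (hxy : y.1 0 = x.1 0) : f y ≤ f x + C := by
  simpa only [birkhoff_one] using hC 1 x y fun i hi => by rw [Nat.lt_one_iff.1 hi, hxy]

lemma BoundedDistortion.exists_lower_bound (hC : BoundedDistortion f C) (F : Finset ℕ) :
    ∃ B, ∀ x : MarkovShift A, x.1 0 ∈ F → B ≤ f x := by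
  have hsymbol (a : ℕ) : BddBelow (f '' {x | x.1 0 = a}) := by
    rcases Set.eq_empty_or_nonempty {x : MarkovShift A | x.1 0 = a} with hempty | ⟨z, rfl⟩
    · rw [hempty, Set.image_empty]
      exact bddBelow_empty
    · refine ⟨f z - C, ?_⟩
      rintro _ ⟨x, hx, rfl⟩
      linarith [hC.le_add_of_apply_zero_eq (y := z) (x := x) (Eq.symm hx)]
  obtain ⟨B, hB⟩ := (F.finite_toSet.bddBelow_biUnion).2 fun a _ => hsymbol a
  exact ⟨B, fun x hx => hB (Set.mem_biUnion hx ⟨x, rfl, rfl⟩)⟩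

lemma ConnectsThrough.hasSpecification (hK : ConnectsThrough A K F) (hC : BoundedDistortion f C)
    (hB : ∀ x : MarkovShift A, x.1 0 ∈ F → B ≤ f x) {β p q : ℝ} (hβ : 0 ≤ β) (hp : p ≤ β * q) :
    HasSpecification (fun x => β * f x - p) K (β * (C + K * (q - B))) := by
  intro n z x
  obtain ⟨y, hyz, hyx, hyF⟩ := hK.exists_glue n z x
  refine ⟨y, hyz, hyx, ?_⟩
  have hdrop : birkhoff f n z ≤ birkhoff f (n + K) y + (C - K * B) := by
    rw [birkhoff_add]
    linarith [hC n y z fun i hi => (hyz i hi).symm, mul_le_birkhoff hB hyF]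
  rw [birkhoff_mul_sub_const, birkhoff_mul_sub_const]
  push_cast
  linarith [mul_le_mul_of_nonneg_left hdrop hβ, mul_le_mul_of_nonneg_left hp K.cast_nonneg]

lemma ConnectsThrough.exists_periodic_le_birkhoff (hK : ConnectsThrough A K F)
    (hC : BoundedDistortion f C) {a b : ℕ} (ha : Admissible A a) (hb : Admissible A b)
    (hB : ∀ x : MarkovShift A, x.1 0 ∈ insert a F → B ≤ f x) :
    ∃ y : MarkovShift A, shift^[K + 1 + (1 + K)] y = y ∧ y.1 0 = a ∧ y.1 (K + 1) = b ∧
      ∀ u : MarkovShift A, u.1 0 = b →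
        f u ≤ (C - (K + 1 + K) * B) + birkhoff f (K + 1 + (1 + K)) y := by
  obtain ⟨y, hy, hya, hyb, hyF, hyF'⟩ := hK.exists_periodic ha hb
  refine ⟨y, hy, hya, hyb, fun u hu => ?_⟩
  have hfirst : ((K + 1 : ℕ) : ℝ) * B ≤ birkhoff f (K + 1) y := by
    refine mul_le_birkhoff hB ?_
    rintro (_ | i) hi
    exacts [Finset.mem_insert.2 (Or.inl hya),
      Finset.mem_insert_of_mem (hyF i (Nat.lt_of_succ_lt_succ hi))]
  have hmiddle : f u ≤ f (shift^[K + 1] y) + C :=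
    hC.le_add_of_apply_zero_eq (by rw [shift_iterate_apply, zero_add, hyb, hu])
  have hlast : K * B ≤ birkhoff f K (shift^[1] (shift^[K + 1] y)) :=
    mul_le_birkhoff hB fun i hi => Finset.mem_insert_of_mem <| by
      simpa only [shift_iterate_apply] using hyF' i hi
  rw [birkhoff_add f (K + 1), birkhoff_add f 1, birkhoff_one]
  push_cast at hfirst
  linarith

/- Each preimage `u` of `x` is charged to a periodic point through `a` that visits the symbol `u₀`
at time `K + 1`, so `L_f 1` is dominated by a multiple of the partition function. -/
lemma ConnectsThrough.exists_transfer_one_le (hK : ConnectsThrough A K F)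
    (hC : BoundedDistortion f C) {a : ℕ} (ha : Admissible A a)
    (hsum : Summable fun x : {x : MarkovShift A // shift^[K + 1 + (1 + K)] x = x ∧ x.1 0 = a} =>
      Real.exp (birkhoff f (K + 1 + (1 + K)) x.1)) :
    ∃ q, ∀ x, transfer f 1 1 x ≤ ennexp q := by
  obtain ⟨B, hB⟩ := hC.exists_lower_bound (insert a F)
  choose y hyper hya hyb hle using fun b : {b // Admissible A b} =>
    hK.exists_periodic_le_birkhoff hC ha b.2 hB
  have hyinj : Function.Injective fun b =>
      (⟨y b, hyper b, hya b⟩ :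
        {x : MarkovShift A // shift^[K + 1 + (1 + K)] x = x ∧ x.1 0 = a}) := by
    intro b b' heq
    have hyy : y b = y b' := congrArg Subtype.val heq
    exact Subtype.ext (by rw [← hyb b, ← hyb b', hyy])
  have hfin : ennexp (C - (K + 1 + K) * B) *
      ∑' b, ennexp (birkhoff f (K + 1 + (1 + K)) (y b)) ≠ ⊤ :=
    ENNReal.mul_ne_top (ennexp_ne_top _) (hsum.comp_injective hyinj).tsum_ofReal_ne_top
  obtain ⟨q, hq⟩ := exists_le_ennexp hfin
  refine ⟨q, fun x => le_trans ?_ hq⟩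
  let firstSymbol : {u : MarkovShift A // shift u = x} → {b // Admissible A b} :=
    fun u => ⟨u.1.1 0, u.1, rfl⟩
  have hinj : Function.Injective firstSymbol := by
    intro u u' heq
    have hzero : u.1.1 0 = u'.1.1 0 := congrArg Subtype.val heq
    exact Subtype.ext (by rw [← cons_shift u.1, ← cons_shift u'.1, hzero, u.2, u'.2])
  rw [← ENNReal.tsum_mul_left, transfer_one_apply]
  refine le_trans (ENNReal.tsum_le_tsum fun u => ?_)
    (ENNReal.tsum_comp_le_tsum_of_injective hinj _)
  rw [Pi.one_apply, mul_one, ← ennexp_add, ennexp_le_ennexp]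
  exact hle (firstSymbol u) u rfl

end distortion

end

theorem gibbs_property_exponential_control_general {A : ℕ → ℕ → Bool} (hA : FinitelyPrimitive A)
    {f : MarkovShift A → ℝ} (hf : Measurable f) {C : ℝ} (hC : BoundedDistortion f C)
    (hsum : ∀ a, Admissible A a → ∀ n, 1 ≤ n →
      Summable fun x : {x : MarkovShift A // shift^[n] x = x ∧ x.1 0 = a} =>
        Real.exp (birkhoff f n x.1)) :
    ∃ η₁ η₂ : ℝ, ∀ β : ℝ, 1 ≤ β → ∀ p h ν, IsRPF (fun x => β * f x) p h ν →
      ∀ (x : MarkovShift A) (m : ℕ),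
        Real.exp (β * η₁) ≤
            (gibbs h ν (cylOf x m)).toReal / Real.exp (β * birkhoff f m x - m * p) ∧
          (gibbs h ν (cylOf x m)).toReal / Real.exp (β * birkhoff f m x - m * p) ≤
            Real.exp (β * η₂) := by
  rcases isEmpty_or_nonempty (MarkovShift A) with hempty | ⟨⟨x₀⟩⟩
  · exact ⟨0, 0, fun _ _ _ _ _ _ x => isEmptyElim x⟩
  obtain ⟨K, F, hK⟩ := hA.exists_connectsThrough
  obtain ⟨B, hB⟩ := hC.exists_lower_bound F
  have hx₀ : Admissible A (x₀.1 0) := ⟨x₀, rfl⟩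
  obtain ⟨q, hq⟩ := hK.exists_transfer_one_le hC hx₀ (hsum _ hx₀ _ (by lia))
  let D : ℝ := C + K * (q - B)
  refine ⟨-(D + D), C + D, fun β hβ p h ν hR x m => ?_⟩
  have hβ₀ : 0 ≤ β := zero_le_one.trans hβ
  have hβf : Measurable fun x => β * f x := hf.const_mul β
  have hM := transfer_const_mul_le hq hβ
  have hs := hK.hasSpecification hC hB hβ₀ (hR.le_of_transfer_one_le hβf hM)
  have hgibbs := hR.gibbs_div_mem_Icc hβf hM hs (hC.mul_sub_const hβ₀ p) x m
  rwa [birkhoff_mul_sub_const, ← mul_add, ← mul_add, ← mul_neg] at hgibbs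

/-- Gibbs inequality with exponential control in `β`: there exist `η₁, η₂` with
`e^{β η₁} ≤ μ_β[x₀ … x_{m-1}] / e^{β S_m f(x) - m P(βf)} ≤ e^{β η₂}` for all `β > 1`,
all `x` and all `m ≥ 1`. -/
theorem gibbs_property_exponential_control
    (A : ℕ → ℕ → Bool)
    (hmix : TopologicallyMixing A)
    (hbip : FinitelyPrimitive A)
    (f : MarkovShift A → ℝ)
    (hWalters : SatisfiesWalters f)
    (hVar1 : Var1Finite f)
    (P : ℝ → ℝ)
    (hPfin : HasGurevichPressure f (P 1))
    (h : ℝ → MarkovShift A → ℝ)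
    (ν : ℝ → Measure (MarkovShift A))
    (hRPF : ∀ β : ℝ, 1 < β → IsRPF (fun x => β * f x) (P β) (h β) (ν β)) :
    ∃ η₁ η₂ : ℝ, ∀ β : ℝ, 1 < β → ∀ x : MarkovShift A, ∀ m : ℕ, 1 ≤ m →
      Real.exp (β * η₁) ≤
          ((gibbs (h β) (ν β)) (cylOf x m)).toReal /
            Real.exp (β * birkhoff f m x - m * P β) ∧
        ((gibbs (h β) (ν β)) (cylOf x m)).toReal /
            Real.exp (β * birkhoff f m x - m * P β) ≤ Real.exp (β * η₂) := by
  obtain ⟨C, hC⟩ := hWalters.exists_boundedDistortion hVar1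
  obtain ⟨η₁, η₂, hη⟩ := gibbs_property_exponential_control_general hbip
    hWalters.continuous.measurable hC fun a ha => (hPfin a ha).1
  exact ⟨η₁, η₂, fun β hβ x m _ => hη β hβ.le (P β) (h β) (ν β) (hRPF β hβ) x m⟩

end MarkovShift
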